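/- (Newton step contraction) Let S ⊆ ℝⁿ be a convex set, let D be a map from S to real symmetric positive definite n×n matrices satisfying the self-concordance inequality on S, and let r : ℝⁿ → ℝⁿ be differentiable on S with Fréchet derivative D(z) at each z ∈ S. Let y ∈ S, set n(y) := −D(y)⁻¹ r(y), y⁺ := y + n(y), n(y⁺) := −D(y⁺)⁻¹ r(y⁺), and δ := ‖n(y)‖_{D(y)}. If δ < 1 and the segment [y, y⁺] is contained in S, then ‖n(y⁺)‖_{D(y⁺)} ≤ δ² / (1 − δ)². -/

import Mathlib

open Matrix

/-- The Hessian norm `‖z‖_H = √(zᵀ H z)` associated with a matrix `H`. -/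
noncomputable def hnorm {ι : Type*} [Fintype ι] (H : Matrix ι ι ℝ) (z : ι → ℝ) : ℝ :=
  Real.sqrt (z ⬝ᵥ H.mulVec z)

/-- A matrix-valued map `D` satisfies the self-concordance inequality on `S`. -/
def SelfConcordantOn {n : ℕ} (S : Set (Fin n → ℝ))
    (D : (Fin n → ℝ) → Matrix (Fin n) (Fin n) ℝ) : Prop :=
  ∀ y₁ ∈ S, ∀ y₂ ∈ S, hnorm (D y₁) (y₂ - y₁) < 1 →
    ∀ v : Fin n → ℝ, hnorm (D y₂) v ≤ hnorm (D y₁) v / (1 - hnorm (D y₁) (y₂ - y₁))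

/-!
Along the segment from `y` to `y + p`, write `δ = ‖p‖_{D(y)}`. Self-concordance based at `y` bounds
the Hessian norms on the segment from above. Applied backwards over short steps, it gives the lower
bound `(1 - δ) ‖v‖_{D(y)} ≤ ‖v‖_{D(y+p)}` in the limit. Both bounds together control
`D(y+tp) - D(y)` as a quadratic form relative to `D(y)`, and integrating in `t` yields
`⟨w, r(y+p) - r(y) - D(y) p⟩ ≤ δ² / (1 - δ) ‖w‖_{D(y)}`. For the Newton step `p` the left side is
`⟨w, r(y+p)⟩`; taking for `-w` the next Newton step and applying the lower bound once more gives the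
second factor `1 - δ`.
-/

section LinearAlgebra

theorem mulVec_neg_inv_mulVec {ι R : Type*} [Fintype ι] [DecidableEq ι] [CommRing R]
    {A : Matrix ι ι R} (hA : IsUnit A) (v : ι → R) : A *ᵥ (-(A⁻¹ *ᵥ v)) = -v := by
  rw [mulVec_neg, mulVec_mulVec, mul_nonsing_inv _ ((isUnit_iff_isUnit_det A).1 hA), one_mulVec]

theorem isSymm_of_isHermitian {ι R : Type*} [Star R] [TrivialStar R] {A : Matrix ι ι R}
    (hA : A.IsHermitian) : A.IsSymm :=
  (conjTranspose_eq_transpose_of_trivial A).symm.trans hA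

variable {ι : Type*} [Fintype ι] (H : Matrix ι ι ℝ) (z : ι → ℝ)

theorem hnorm_nonneg : 0 ≤ hnorm H z :=
  Real.sqrt_nonneg _

theorem hnorm_smul (c : ℝ) : hnorm H (c • z) = |c| * hnorm H z := by
  simp only [hnorm, mulVec_smul, dotProduct_smul, smul_dotProduct, smul_eq_mul]
  rw [← mul_assoc, Real.sqrt_mul (mul_self_nonneg c), Real.sqrt_mul_self_eq_abs]

theorem mul_hnorm_lt_one {t : ℝ} (ht : t ≤ 1) (hz : hnorm H z < 1) : t * hnorm H z < 1 :=
  (mul_le_of_le_one_left (hnorm_nonneg H z) ht).trans_lt hz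

theorem hnorm_smul_lt_one {t : ℝ} (ht : t ∈ Set.Icc (0 : ℝ) 1) (hz : hnorm H z < 1) :
    hnorm H (t • z) < 1 := by
  rw [hnorm_smul, abs_of_nonneg ht.1]
  exact mul_hnorm_lt_one H z ht.2 hz

theorem hnorm_neg : hnorm H (-z) = hnorm H z := by
  simp only [hnorm, mulVec_neg, neg_dotProduct_neg]

variable {H}

theorem sq_hnorm (hH : H.PosSemidef) : hnorm H z ^ 2 = z ⬝ᵥ H *ᵥ z :=
  Real.sq_sqrt (by simpa only [star_trivial] using hH.dotProduct_mulVec_nonneg z)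

theorem dotProduct_mulVec_le_of_abs_le {A : Matrix ι ι ℝ} (hA : A.IsSymm) (hH : H.PosSemidef)
    {c : ℝ} (hc : 0 ≤ c) (h : ∀ v, |v ⬝ᵥ A *ᵥ v| ≤ c * hnorm H v ^ 2) (w p : ι → ℝ) :
    w ⬝ᵥ A *ᵥ p ≤ c * (hnorm H w * hnorm H p) := by
  have symm : p ⬝ᵥ A *ᵥ w = w ⬝ᵥ A *ᵥ p := by
    rw [← dotProduct_transpose_mulVec, hA.eq]
  -- The polarization `4 s ⟨w, A p⟩ = ⟨s w + p, A (s w + p)⟩ - ⟨s w - p, A (s w - p)⟩`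
  -- and the parallelogram law for `H` make this quadratic polynomial in `s` nonnegative.
  have quadratic_nonneg (s : ℝ) :
      0 ≤ c * hnorm H w ^ 2 * (s * s) + -2 * (w ⬝ᵥ A *ᵥ p) * s + c * hnorm H p ^ 2 := by
    have upper := (abs_le.1 (h (s • w + p))).2
    have lower := (abs_le.1 (h (s • w - p))).1
    simp only [sq_hnorm _ hH, mulVec_add, mulVec_sub, mulVec_smul, dotProduct_add, dotProduct_sub,
      add_dotProduct, sub_dotProduct, smul_dotProduct, dotProduct_smul, smul_eq_mul,
      symm] at upper lower ⊢
    linarith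
  have discrim_nonpos := discrim_le_zero quadratic_nonneg
  have rhs_nonneg : 0 ≤ c * (hnorm H w * hnorm H p) :=
    mul_nonneg hc (mul_nonneg (hnorm_nonneg _ _) (hnorm_nonneg _ _))
  refine le_of_sq_le_sq ?_ rhs_nonneg
  rw [discrim] at discrim_nonpos
  linarith

end LinearAlgebra

section Segment

variable {𝕜 E : Type*} [Field 𝕜] [LinearOrder 𝕜] [IsStrictOrderedRing 𝕜] [AddCommGroup E]
  [Module 𝕜 E] {S : Set E} {y p : E} {t : 𝕜}

theorem add_smul_mem_of_segment_subset (hseg : segment 𝕜 y (y + p) ⊆ S)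
    (ht : t ∈ Set.Icc (0 : 𝕜) 1) : y + t • p ∈ S :=
  hseg ((convex_segment y (y + p)).add_smul_mem (left_mem_segment 𝕜 _ _)
    (right_mem_segment 𝕜 _ _) ht)

theorem segment_add_smul_subset (hseg : segment 𝕜 y (y + p) ⊆ S)
    (ht : t ∈ Set.Icc (0 : 𝕜) 1) : segment 𝕜 y (y + t • p) ⊆ S :=
  ((convex_segment y (y + p)).segment_subset (left_mem_segment 𝕜 _ _)
    (add_smul_mem_of_segment_subset subset_rfl ht)).trans hseg

end Segment

section Calculus

theorem monotoneOn_of_sub_le_mul_sq {I : Set ℝ} [I.OrdConnected] {g : ℝ → ℝ} {C : ℝ}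
    (hg : ∀ s ∈ I, ∀ t ∈ I, s ≤ t → g s - g t ≤ C * (t - s) ^ 2) : MonotoneOn g I := by
  intro a ha b hb hab
  have decrease_le (N : ℕ) (hN : 0 < N) : g a - g b ≤ C * (b - a) ^ 2 / N := by
    have hN' : (0 : ℝ) < N := by exact_mod_cast hN
    set x : ℕ → ℝ := fun k => a + k * ((b - a) / N) with hx
    have step_nonneg : 0 ≤ (b - a) / N := div_nonneg (sub_nonneg.2 hab) hN'.le
    have x_zero : x 0 = a := by simp [hx]
    have x_last : x N = b := by simp only [hx]; field_simp; ring
    have x_mono : Monotone x := fun j k hjk =>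
      add_le_add_right (mul_le_mul_of_nonneg_right (Nat.cast_le.2 hjk) step_nonneg) a
    have x_mem (k : ℕ) (hk : k ≤ N) : x k ∈ I :=
      Set.Icc_subset I ha hb ⟨x_zero ▸ x_mono k.zero_le, x_last ▸ x_mono hk⟩
    calc g a - g b = ∑ k ∈ Finset.range N, (g (x k) - g (x (k + 1))) := by
          rw [Finset.sum_range_sub', x_zero, x_last]
      _ ≤ ∑ k ∈ Finset.range N, C * (x (k + 1) - x k) ^ 2 := by
          refine Finset.sum_le_sum fun k hk => ?_
          rw [Finset.mem_range] at hk
          exact hg _ (x_mem k hk.le) _ (x_mem (k + 1) hk) (x_mono k.le_succ)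
      _ = C * (b - a) ^ 2 / N := by
          simp only [hx, Nat.cast_succ, add_sub_add_left_eq_sub, ← sub_mul, add_sub_cancel_left,
            one_mul, Finset.sum_const, Finset.card_range, nsmul_eq_mul]
          field_simp
  refine sub_nonpos.1 (ge_of_tendsto (tendsto_const_div_atTop_nhds_zero_nat (C * (b - a) ^ 2)) ?_)
  filter_upwards [Filter.eventually_gt_atTop 0] with N hN using decrease_le N hN

theorem hasDerivWithinAt_dotProduct_comp_add_smul {ι κ : Type*} [Fintype ι] [Fintype κ]
    {r : (ι → ℝ) → κ → ℝ} {A : Matrix κ ι ℝ} {S : Set (ι → ℝ)} {I : Set ℝ} {y p : ι → ℝ} {t : ℝ}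
    (hr : HasFDerivWithinAt r A.mulVecLin.toContinuousLinearMap S (y + t • p))
    (hI : Set.MapsTo (fun s : ℝ => y + s • p) I S) (w : κ → ℝ) :
    HasDerivWithinAt (fun s : ℝ => w ⬝ᵥ r (y + s • p)) (w ⬝ᵥ A *ᵥ p) I t := by
  have line_deriv : HasDerivWithinAt (fun s : ℝ => y + s • p) p I t := by
    simpa using ((hasDerivWithinAt_id t I).smul_const p).const_add y
  have coord_deriv := hasDerivWithinAt_pi.1 (hr.comp_hasDerivWithinAt t line_deriv hI)
  exact HasDerivWithinAt.fun_sum fun i _ => (coord_deriv i).const_mul (w i)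

theorem hasDerivAt_div_one_sub_mul_sub {δ t : ℝ} (h : 1 - t * δ ≠ 0) :
    HasDerivAt (fun s : ℝ => s / (1 - s * δ) - s) (1 / (1 - t * δ) ^ 2 - 1) t := by
  have hquot := (hasDerivAt_id t).div (((hasDerivAt_id t).mul_const δ).const_sub 1) h
  refine (hquot.sub (hasDerivAt_id t)).congr_deriv ?_
  simp only [id]
  ring

end Calculus

namespace SelfConcordantOn

variable {n : ℕ} {S : Set (Fin n → ℝ)} {D : (Fin n → ℝ) → Matrix (Fin n) (Fin n) ℝ}
  {y p : Fin n → ℝ}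

theorem hnorm_le_div_one_sub (hSC : SelfConcordantOn S D) (hδ : hnorm (D y) p < 1)
    (hseg : segment ℝ y (y + p) ⊆ S) (v : Fin n → ℝ) :
    hnorm (D (y + p)) v ≤ hnorm (D y) v / (1 - hnorm (D y) p) := by
  simpa only [add_sub_cancel_left] using
    hSC y (hseg (left_mem_segment ℝ _ _)) (y + p) (hseg (right_mem_segment ℝ _ _))
      (by rwa [add_sub_cancel_left]) v

theorem hnorm_le_div_one_sub_mul (hSC : SelfConcordantOn S D) (hδ : hnorm (D y) p < 1)
    (hseg : segment ℝ y (y + p) ⊆ S) {t : ℝ} (ht : t ∈ Set.Icc (0 : ℝ) 1) (v : Fin n → ℝ) :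
    hnorm (D (y + t • p)) v ≤ hnorm (D y) v / (1 - t * hnorm (D y) p) := by
  simpa only [hnorm_smul, abs_of_nonneg ht.1] using hSC.hnorm_le_div_one_sub
    (hnorm_smul_lt_one _ _ ht hδ) (segment_add_smul_subset hseg ht) v

theorem sub_mul_hnorm_le (hSC : SelfConcordantOn S D) (hδ : hnorm (D y) p < 1)
    (hseg : segment ℝ y (y + p) ⊆ S) {s t : ℝ} (hs : s ∈ Set.Icc (0 : ℝ) 1)
    (ht : t ∈ Set.Icc (0 : ℝ) 1) (hst : s ≤ t) (v : Fin n → ℝ) :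
    (1 - t * hnorm (D y) p - (t - s) * hnorm (D y) p) * hnorm (D (y + s • p)) v ≤
      (1 - t * hnorm (D y) p) * hnorm (D (y + t • p)) v := by
  set δ := hnorm (D y) p
  have denom_pos : 0 < 1 - t * δ := sub_pos.2 (mul_hnorm_lt_one _ _ ht.2 hδ)
  have displacement : y + s • p - (y + t • p) = (s - t) • p := by
    rw [add_sub_add_left_eq_sub, sub_smul]
  have dist_le : hnorm (D (y + t • p)) (y + s • p - (y + t • p)) ≤ (t - s) * δ / (1 - t * δ) := by
    rw [displacement, hnorm_smul, abs_sub_comm, abs_of_nonneg (sub_nonneg.2 hst), mul_div_assoc]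
    exact mul_le_mul_of_nonneg_left (hSC.hnorm_le_div_one_sub_mul hδ hseg ht p) (sub_nonneg.2 hst)
  obtain factor_nonpos | factor_pos := le_or_gt (1 - t * δ - (t - s) * δ) 0
  · exact (mul_nonpos_of_nonpos_of_nonneg factor_nonpos (hnorm_nonneg _ _)).trans
      (mul_nonneg denom_pos.le (hnorm_nonneg _ _))
  · have bound_lt_one : (t - s) * δ / (1 - t * δ) < 1 := by rw [div_lt_one denom_pos]; linarith
    have dist_lt_one := dist_le.trans_lt bound_lt_one
    have backward := hSC _ (add_smul_mem_of_segment_subset hseg ht) _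
      (add_smul_mem_of_segment_subset hseg hs) dist_lt_one v
    rw [le_div_iff₀ (sub_pos.2 dist_lt_one)] at backward
    calc (1 - t * δ - (t - s) * δ) * hnorm (D (y + s • p)) v
        = (1 - t * δ) * (hnorm (D (y + s • p)) v * (1 - (t - s) * δ / (1 - t * δ))) := by
          field_simp
      _ ≤ (1 - t * δ) * (hnorm (D (y + s • p)) v *
            (1 - hnorm (D (y + t • p)) (y + s • p - (y + t • p)))) := by
          gcongr
          exact hnorm_nonneg _ _
      _ ≤ (1 - t * δ) * hnorm (D (y + t • p)) v := by gcongr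

-- With `a = 1 - tδ` and `e = (t - s)δ`, the backward estimate costs the factor `(a - e) / a`,
-- whereas the weights differ by the factor `(a + e) / a`. Their product is `1 - (e / a)²`,
-- so the weighted norm decreases by at most a quadratic error.
theorem monotoneOn_hnorm_div (hSC : SelfConcordantOn S D) (hδ : hnorm (D y) p < 1)
    (hseg : segment ℝ y (y + p) ⊆ S) (v : Fin n → ℝ) :
    MonotoneOn (fun t : ℝ => hnorm (D (y + t • p)) v / (1 - t * hnorm (D y) p))
      (Set.Icc 0 1) := by
  set δ := hnorm (D y) p
  have hδ₀ : 0 ≤ δ := hnorm_nonneg _ _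
  have hδ₁ : 0 < 1 - δ := sub_pos.2 hδ
  have le_denom {t : ℝ} (ht : t ∈ Set.Icc (0 : ℝ) 1) : 1 - δ ≤ 1 - t * δ :=
    sub_le_sub_left (mul_le_of_le_one_left hδ₀ ht.2) 1
  refine monotoneOn_of_sub_le_mul_sq (C := hnorm (D y) v * δ ^ 2 / (1 - δ) ^ 4)
    fun s hs t ht hst => ?_
  have hs_pos : 0 < 1 - s * δ := hδ₁.trans_le (le_denom hs)
  have ht_pos : 0 < 1 - t * δ := hδ₁.trans_le (le_denom ht)
  have norm_y_nonneg : 0 ≤ hnorm (D y) v := hnorm_nonneg _ _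
  calc hnorm (D (y + s • p)) v / (1 - s * δ) - hnorm (D (y + t • p)) v / (1 - t * δ)
      = hnorm (D (y + s • p)) v / (1 - s * δ) -
          (1 - t * δ) * hnorm (D (y + t • p)) v / (1 - t * δ) ^ 2 := by field_simp
    _ ≤ hnorm (D (y + s • p)) v / (1 - s * δ) -
          (1 - t * δ - (t - s) * δ) * hnorm (D (y + s • p)) v / (1 - t * δ) ^ 2 := by
        exact sub_le_sub_left (div_le_div_of_nonneg_right
          (hSC.sub_mul_hnorm_le hδ hseg hs ht hst v) (sq_nonneg _)) _
    _ = hnorm (D (y + s • p)) v * ((t - s) * δ) ^ 2 / ((1 - s * δ) * (1 - t * δ) ^ 2) := by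
        rw [div_sub_div _ _ hs_pos.ne' (pow_pos ht_pos 2).ne']
        ring
    _ ≤ hnorm (D y) v / (1 - s * δ) * ((t - s) * δ) ^ 2 / ((1 - s * δ) * (1 - t * δ) ^ 2) := by
        gcongr
        exact hSC.hnorm_le_div_one_sub_mul hδ hseg hs v
    _ ≤ hnorm (D y) v / (1 - δ) * ((t - s) * δ) ^ 2 / ((1 - δ) * (1 - δ) ^ 2) := by
        gcongr ?_ / ?_ * _ / (?_ * ?_ ^ 2)
        exacts [le_rfl, le_denom hs, le_denom hs, le_denom ht]
    _ = hnorm (D y) v * δ ^ 2 / (1 - δ) ^ 4 * (t - s) ^ 2 := by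
        field_simp

theorem one_sub_mul_hnorm_le (hSC : SelfConcordantOn S D) (hδ : hnorm (D y) p < 1)
    (hseg : segment ℝ y (y + p) ⊆ S) (v : Fin n → ℝ) :
    (1 - hnorm (D y) p) * hnorm (D y) v ≤ hnorm (D (y + p)) v := by
  have endpoints := hSC.monotoneOn_hnorm_div hδ hseg v (Set.left_mem_Icc.2 zero_le_one)
    (Set.right_mem_Icc.2 zero_le_one) zero_le_one
  simp only [zero_smul, add_zero, zero_mul, sub_zero, div_one, one_smul, one_mul] at endpoints
  rwa [le_div_iff₀' (sub_pos.2 hδ)] at endpoints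

theorem abs_dotProduct_sub_mulVec_le (hSC : SelfConcordantOn S D)
    (hD : ∀ z ∈ S, (D z).PosSemidef) (hδ : hnorm (D y) p < 1)
    (hseg : segment ℝ y (y + p) ⊆ S) (v : Fin n → ℝ) :
    |v ⬝ᵥ (D (y + p) - D y) *ᵥ v| ≤
      (1 / (1 - hnorm (D y) p) ^ 2 - 1) * hnorm (D y) v ^ 2 := by
  rw [sub_mulVec, dotProduct_sub, ← sq_hnorm _ (hD _ (hseg (right_mem_segment ℝ _ _))),
    ← sq_hnorm _ (hD _ (hseg (left_mem_segment ℝ _ _)))]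
  have upper := pow_le_pow_left₀ (hnorm_nonneg _ _) (hSC.hnorm_le_div_one_sub hδ hseg v) 2
  have lower := pow_le_pow_left₀
    (mul_nonneg (sub_pos.2 hδ).le (hnorm_nonneg _ _)) (hSC.one_sub_mul_hnorm_le hδ hseg v) 2
  set u := 1 - hnorm (D y) p
  have hu : 0 < u := sub_pos.2 hδ
  have two_le : 2 ≤ u ^ 2 + 1 / u ^ 2 := by
    have square : u ^ 2 + 1 / u ^ 2 - 2 = (u - 1 / u) ^ 2 := by field_simp; ring
    linarith [sq_nonneg (u - 1 / u)]
  rw [div_pow, div_eq_mul_one_div] at upper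
  rw [mul_pow] at lower
  have scaled := mul_le_mul_of_nonneg_right two_le (sq_nonneg (hnorm (D y) v))
  rw [abs_le]
  constructor <;> linarith

theorem dotProduct_sub_mulVec_le (hSC : SelfConcordantOn S D)
    (hD : ∀ z ∈ S, (D z).PosSemidef) (hδ : hnorm (D y) p < 1)
    (hseg : segment ℝ y (y + p) ⊆ S) (w v : Fin n → ℝ) :
    w ⬝ᵥ (D (y + p) - D y) *ᵥ v ≤
      (1 / (1 - hnorm (D y) p) ^ 2 - 1) * (hnorm (D y) w * hnorm (D y) v) := by
  have hy := hD y (hseg (left_mem_segment ℝ _ _))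
  have hyp := hD (y + p) (hseg (right_mem_segment ℝ _ _))
  have factor_nonneg : 0 ≤ 1 / (1 - hnorm (D y) p) ^ 2 - 1 := by
    rw [sub_nonneg, one_le_div (pow_pos (sub_pos.2 hδ) 2)]
    exact pow_le_one₀ (sub_pos.2 hδ).le (sub_le_self 1 (hnorm_nonneg _ _))
  exact dotProduct_mulVec_le_of_abs_le
    (isSymm_of_isHermitian (hyp.isHermitian.sub hy.isHermitian)) hy factor_nonneg
    (hSC.abs_dotProduct_sub_mulVec_le hD hδ hseg) w v

theorem dotProduct_mulVec_sub_le_of_mem_Icc (hSC : SelfConcordantOn S D)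
    (hD : ∀ z ∈ S, (D z).PosSemidef) (hδ : hnorm (D y) p < 1)
    (hseg : segment ℝ y (y + p) ⊆ S) {t : ℝ} (ht : t ∈ Set.Icc (0 : ℝ) 1) (w v : Fin n → ℝ) :
    w ⬝ᵥ D (y + t • p) *ᵥ v - w ⬝ᵥ D y *ᵥ v ≤
      (1 / (1 - t * hnorm (D y) p) ^ 2 - 1) * (hnorm (D y) w * hnorm (D y) v) := by
  simpa only [hnorm_smul, abs_of_nonneg ht.1, sub_mulVec, dotProduct_sub] using
    hSC.dotProduct_sub_mulVec_le hD (hnorm_smul_lt_one _ _ ht hδ)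
      (segment_add_smul_subset hseg ht) w v

theorem dotProduct_linearization_error_le (hSC : SelfConcordantOn S D)
    (hD : ∀ z ∈ S, (D z).PosSemidef) {r : (Fin n → ℝ) → Fin n → ℝ}
    (hr : ∀ z ∈ S, HasFDerivWithinAt r (D z).mulVecLin.toContinuousLinearMap S z)
    (hδ : hnorm (D y) p < 1) (hseg : segment ℝ y (y + p) ⊆ S) (w : Fin n → ℝ) :
    w ⬝ᵥ (r (y + p) - r y - D y *ᵥ p) ≤
      hnorm (D y) p ^ 2 / (1 - hnorm (D y) p) * hnorm (D y) w := by
  set δ := hnorm (D y) p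
  have hδ_ne : 1 - δ ≠ 0 := (sub_pos.2 hδ).ne'
  have gap_deriv (t : ℝ) (ht : t ∈ Set.Icc (0 : ℝ) 1) : HasDerivWithinAt
      (fun s : ℝ => (s / (1 - s * δ) - s) * (hnorm (D y) w * δ) -
        (w ⬝ᵥ r (y + s • p) - s * (w ⬝ᵥ D y *ᵥ p)))
      ((1 / (1 - t * δ) ^ 2 - 1) * (hnorm (D y) w * δ) -
        (w ⬝ᵥ D (y + t • p) *ᵥ p - w ⬝ᵥ D y *ᵥ p)) (Set.Icc 0 1) t := by
    have residual_deriv := hasDerivWithinAt_dotProduct_comp_add_smul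
      (hr _ (add_smul_mem_of_segment_subset hseg ht))
      (fun _ hs => add_smul_mem_of_segment_subset hseg hs) w
    have bound_deriv :=
      hasDerivAt_div_one_sub_mul_sub (sub_pos.2 (mul_hnorm_lt_one _ _ ht.2 hδ)).ne'
    exact (bound_deriv.hasDerivWithinAt.mul_const _).sub
      (residual_deriv.sub (hasDerivAt_mul_const _).hasDerivWithinAt)
  have gap_mono := monotoneOn_of_hasDerivWithinAt_nonneg (convex_Icc (0 : ℝ) 1)
    (fun t ht => (gap_deriv t ht).continuousWithinAt)
    (fun t ht => (gap_deriv t (interior_subset ht)).mono interior_subset)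
    (fun t ht => sub_nonneg.2
      (hSC.dotProduct_mulVec_sub_le_of_mem_Icc hD hδ hseg (interior_subset ht) w p))
  have endpoints := gap_mono (Set.left_mem_Icc.2 zero_le_one) (Set.right_mem_Icc.2 zero_le_one)
    zero_le_one
  simp only [zero_smul, add_zero, one_smul, zero_div, zero_mul, one_mul, sub_zero,
    zero_sub] at endpoints
  calc w ⬝ᵥ (r (y + p) - r y - D y *ᵥ p) ≤ (1 / (1 - δ) - 1) * (hnorm (D y) w * δ) := by
        rw [dotProduct_sub, dotProduct_sub]
        linarith
    _ = δ ^ 2 / (1 - δ) * hnorm (D y) w := by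
        field_simp
        ring

end SelfConcordantOn

theorem stmt_3_general {n : ℕ} {S : Set (Fin n → ℝ)}
    {D : (Fin n → ℝ) → Matrix (Fin n) (Fin n) ℝ} (hD : ∀ z ∈ S, (D z).PosSemidef)
    (hSC : SelfConcordantOn S D) {r : (Fin n → ℝ) → Fin n → ℝ}
    (hr : ∀ z ∈ S, HasFDerivWithinAt r (D z).mulVecLin.toContinuousLinearMap S z)
    {y p q : Fin n → ℝ} (hδ : hnorm (D y) p < 1) (hseg : segment ℝ y (y + p) ⊆ S)
    (hp : D y *ᵥ p = -r y) (hq : D (y + p) *ᵥ q = -r (y + p)) :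
    hnorm (D (y + p)) q ≤ hnorm (D y) p ^ 2 / (1 - hnorm (D y) p) ^ 2 := by
  have error_le := hSC.dotProduct_linearization_error_le hD hr hδ hseg (-q)
  have lower := hSC.one_sub_mul_hnorm_le hδ hseg q
  set δ := hnorm (D y) p
  have hδ_pos : 0 < 1 - δ := sub_pos.2 hδ
  have sq_le : hnorm (D (y + p)) q ^ 2 ≤ δ ^ 2 / (1 - δ) ^ 2 * hnorm (D (y + p)) q :=
    calc hnorm (D (y + p)) q ^ 2 = -q ⬝ᵥ (r (y + p) - r y - D y *ᵥ p) := by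
          rw [sq_hnorm _ (hD _ (hseg (right_mem_segment ℝ _ _))), hq, hp, sub_neg_eq_add,
            sub_add_cancel, neg_dotProduct, dotProduct_neg]
      _ ≤ δ ^ 2 / (1 - δ) * hnorm (D y) q := by rwa [hnorm_neg] at error_le
      _ = δ ^ 2 / (1 - δ) ^ 2 * ((1 - δ) * hnorm (D y) q) := by field_simp
      _ ≤ δ ^ 2 / (1 - δ) ^ 2 * hnorm (D (y + p)) q := by gcongr
  obtain norm_zero | norm_pos := (hnorm_nonneg (D (y + p)) q).eq_or_lt
  · rw [← norm_zero]
    positivity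
  · rw [sq] at sq_le
    exact le_of_mul_le_mul_right sq_le norm_pos

/-- Newton step contraction. -/
theorem stmt_3 {n : ℕ} (S : Set (Fin n → ℝ)) (hS : Convex ℝ S)
    (D : (Fin n → ℝ) → Matrix (Fin n) (Fin n) ℝ)
    (hPD : ∀ y ∈ S, (D y).PosDef)
    (hSC : SelfConcordantOn S D)
    (r : (Fin n → ℝ) → (Fin n → ℝ))
    (hr : ∀ z ∈ S,
      HasFDerivWithinAt r ((D z).mulVecLin.toContinuousLinearMap) S z)
    (y : Fin n → ℝ) (hy : y ∈ S)
    -- `n(y) := −D(y)⁻¹ r(y)`, `y⁺ := y + n(y)`, `δ := ‖n(y)‖_{D(y)}`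
    (hδ : hnorm (D y) (-(D y)⁻¹.mulVec (r y)) < 1)
    (hseg : segment ℝ y (y + -(D y)⁻¹.mulVec (r y)) ⊆ S) :
    hnorm (D (y + -(D y)⁻¹.mulVec (r y)))
        (-(D (y + -(D y)⁻¹.mulVec (r y)))⁻¹.mulVec (r (y + -(D y)⁻¹.mulVec (r y)))) ≤
      (hnorm (D y) (-(D y)⁻¹.mulVec (r y))) ^ 2 /
        (1 - hnorm (D y) (-(D y)⁻¹.mulVec (r y))) ^ 2 :=
  stmt_3_general (fun z hz => (hPD z hz).posSemidef) hSC hr hδ hseg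
    (mulVec_neg_inv_mulVec (hPD y hy).isUnit _)
    (mulVec_neg_inv_mulVec (hPD _ (hseg (right_mem_segment ℝ _ _))).isUnit _)
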